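/- Every element of F of the form P/Q, with P ∈ R and Q a nonzero finite product of polynomials of total degree at most one, can be written as a finite sum Σ A(μ,u)·Φ(μ,u), where the sum ranges over pairs (μ,u) with μ : {0,…,d} → ℤ satisfying Σ_k μ(k) = 0 and u ∈ U({k : μ(k) ≥ 0}), and A(μ,u) ∈ K; moreover, the coefficients A(μ,u) in such an expression are uniquely determined (i.e. the family (Φ(μ,u)) over this index set is K-linearly independent). -/

import Mathlib

/-- The inhomogeneous linear form ℓ_k^u = x_k + Σ_{k<i≤d−1} u_{ik}·x_i + u_{dk}. -/
noncomputable def PFDell (K : Type) [Field K] (d : ℕ)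
    (u : Matrix (Fin (d+1)) (Fin (d+1)) K) (k : Fin d) : MvPolynomial (Fin d) K :=
  MvPolynomial.X k +
    (∑ i ∈ Finset.univ.filter (fun i => k < i),
      MvPolynomial.C (u i.castSucc k.castSucc) * MvPolynomial.X i) +
    MvPolynomial.C (u (Fin.last d) k.castSucc)

/-- Φ(μ,u) = ∏_{k=0}^{d−1} (ℓ_k^u)^{μ(k)}, the inhomogeneous form of u_*Ξ_μ. -/
noncomputable def PFDPhi (K : Type) [Field K] (d : ℕ) (μ : Fin (d+1) → ℤ)
    (u : Matrix (Fin (d+1)) (Fin (d+1)) K) :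
    FractionRing (MvPolynomial (Fin d) K) :=
  ∏ k : Fin d,
    (algebraMap (MvPolynomial (Fin d) K) (FractionRing (MvPolynomial (Fin d) K))
      (PFDell K d u k)) ^ (μ k.castSucc)

/-- The index set: pairs (μ,u) with Σ_k μ(k) = 0 and u a lower triangular unipotent
matrix lying in U({k : μ(k) ≥ 0}), i.e. u_{ij} = 0 whenever i > j and μ(j) ≥ 0. -/
def PFDvalid (K : Type) [Field K] (d : ℕ)
    (p : (Fin (d+1) → ℤ) × Matrix (Fin (d+1)) (Fin (d+1)) K) : Prop :=
  (∑ k, p.1 k) = 0 ∧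
  (∀ i, p.2 i i = 1) ∧ (∀ i j : Fin (d+1), i < j → p.2 i j = 0) ∧
  (∀ i j : Fin (d+1), j < i → 0 ≤ p.1 j → p.2 i j = 0)

/-!
For distinct linear forms `l`, `l'` in the later variables, the one-variable relations
`(t + l)⁻¹ (t + l')⁻¹ = ((t + l)⁻¹ - (t + l')⁻¹) / (l' - l)` and `t (t + l)⁻¹ = 1 - l (t + l)⁻¹`
rewrite a product of powers of affine forms as a combination of powers of single ones. The
coefficients stay in the algebra of fractions in the later variables because `l' - l` is again a
linear form, so one can eliminate `x_0, x_1, …` in turn. Uniqueness follows the same induction: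
`x_k` is transcendental over the field generated by the later variables, where partial fractions
in one variable are unique. Finally, a matrix `u ∈ U` is nothing but the tuple of the linear forms
in the later variables given by its columns.
-/

section Spanning

variable {R B : Type*} [CommSemiring R] [CommSemiring B] [Algebra R B]

theorem mul_pow_mem_span_pow {G : Set B}
    (hG : G.Pairwise fun x y => x * y ∈ Submodule.span R {1, x, y})
    {x y : B} (hx : x ∈ G) (hy : y ∈ G) (n : ℕ) :
    x * y ^ n ∈ Submodule.span R {z | ∃ g ∈ G, ∃ n : ℕ, g ^ n = z} := by
  set M := Submodule.span R {z | ∃ g ∈ G, ∃ n : ℕ, g ^ n = z}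
  have pow_mem : ∀ g ∈ G, ∀ n : ℕ, g ^ n ∈ M := fun g hg n => Submodule.subset_span ⟨g, hg, n, rfl⟩
  obtain rfl | hxy := eq_or_ne x y
  · exact pow_succ' x n ▸ pow_mem x hx (n + 1)
  induction n with
  | zero => simpa only [pow_zero, mul_one, pow_one] using pow_mem x hx 1
  | succ n ih =>
    obtain ⟨a, b, c, h⟩ := Submodule.mem_span_triple.1 (hG hx hy hxy)
    have reduce : x * y ^ (n + 1) = a • y ^ n + b • (x * y ^ n) + c • y ^ (n + 1) := by
      rw [pow_succ', ← mul_assoc, ← h]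
      simp only [add_mul, smul_mul_assoc, one_mul]
    rw [reduce]
    exact add_mem (add_mem (M.smul_mem a (pow_mem y hy n)) (M.smul_mem b ih))
      (M.smul_mem c (pow_mem y hy (n + 1)))

theorem adjoin_eq_span_pow {G : Set B} (hne : G.Nonempty)
    (hG : G.Pairwise fun x y => x * y ∈ Submodule.span R {1, x, y}) :
    (Algebra.adjoin R G).toSubmodule =
      Submodule.span R {z | ∃ g ∈ G, ∃ n : ℕ, g ^ n = z} := by
  apply le_antisymm
  · rw [Algebra.adjoin_eq_span, Submodule.span_le]
    intro z hz
    induction hz using Submonoid.closure_induction_left with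
    | one => exact Submodule.subset_span ⟨hne.some, hne.some_mem, 0, pow_zero _⟩
    | mul_left x hx z _ ih =>
      have mul_le : Submodule.span R {z | ∃ g ∈ G, ∃ n : ℕ, g ^ n = z} ≤
          (Submodule.span R {z | ∃ g ∈ G, ∃ n : ℕ, g ^ n = z}).comap (LinearMap.mulLeft R x) := by
        rw [Submodule.span_le]
        rintro _ ⟨g, hg, n, rfl⟩
        exact mul_pow_mem_span_pow hG hx hg n
      exact mul_le ih
  · rw [Submodule.span_le]
    rintro _ ⟨g, hg, n, rfl⟩
    exact pow_mem (Algebra.subset_adjoin hg) n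

variable {A F : Type*} [CommRing A] [Field F] [Algebra A F]

theorem pairwise_mul_mem_span_inv_add {t : F} {S : Set A}
    (ht : ∀ l ∈ S, t + algebraMap A F l ≠ 0) (hS : S.Pairwise fun a b => IsUnit (a - b)) :
    (insert t ((fun l => (t + algebraMap A F l)⁻¹) '' S)).Pairwise
      fun x y => x * y ∈ Submodule.span A {1, x, y} := by
  have : Std.Symm fun x y : F => x * y ∈ Submodule.span A {1, x, y} :=
    ⟨fun x y h => by rwa [mul_comm, Set.pair_comm]⟩
  refine Set.pairwise_insert_of_symm.2 ⟨?_, ?_⟩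
  · rintro _ ⟨l, hl, rfl⟩ _ ⟨l', hl', rfl⟩ hne
    obtain ⟨v, hv⟩ := hS hl' hl fun h => hne (by rw [h])
    have hv' : algebraMap A F ↑v⁻¹ * (algebraMap A F l' - algebraMap A F l) = 1 := by
      rw [← map_sub, ← hv, ← map_mul, Units.inv_mul, map_one]
    refine Submodule.mem_span_triple.2 ⟨0, ↑v⁻¹, -↑v⁻¹, ?_⟩
    have h := ht l hl
    have h' := ht l' hl'
    simp only [Algebra.smul_def, map_neg, map_zero]
    field_simp
    linear_combination hv'
  · rintro _ ⟨l, hl, rfl⟩ -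
    refine Submodule.mem_span_triple.2 ⟨1, 0, -l, ?_⟩
    have h := ht l hl
    simp only [Algebra.smul_def, map_neg, map_one, map_zero]
    field_simp
    ring

theorem adjoin_inv_add_eq_span_zpow {t : F} {S : Set A} (h0 : 0 ∈ S)
    (ht : ∀ l ∈ S, t + algebraMap A F l ≠ 0) (hS : S.Pairwise fun a b => IsUnit (a - b)) :
    (Algebra.adjoin A (insert t ((fun l => (t + algebraMap A F l)⁻¹) '' S))).toSubmodule =
      Submodule.span A ((fun p : ℤ × A => (t + algebraMap A F p.2) ^ p.1) ''
        {p | p.2 ∈ S ∧ (0 ≤ p.1 → p.2 = 0)}) := by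
  rw [adjoin_eq_span_pow (Set.insert_nonempty _ _) (pairwise_mul_mem_span_inv_add ht hS)]
  congr 1
  apply subset_antisymm
  · rintro _ ⟨_, rfl | ⟨l, hl, rfl⟩, n, rfl⟩
    · exact ⟨(n, 0), ⟨h0, fun _ => rfl⟩, by simp⟩
    · obtain rfl | hn := n.eq_zero_or_pos
      · exact ⟨(0, 0), ⟨h0, fun _ => rfl⟩, by simp⟩
      · exact ⟨(-n, l), ⟨hl, fun h => by simp only at h; omega⟩, by simp⟩
  · rintro _ ⟨⟨n | n, l⟩, ⟨hl, hn⟩, rfl⟩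
    · obtain rfl : l = 0 := hn (Int.natCast_nonneg n)
      exact ⟨t, Set.mem_insert _ _, n, by simp⟩
    · exact ⟨_, Or.inr ⟨l, hl, rfl⟩, n + 1, by simp [zpow_negSucc]⟩

end Spanning

section Independence

open Polynomial

variable {L F : Type*} [Field L] [Field F] [Algebra L F] {t : F}

theorem add_algebraMap_ne_zero_of_transcendental (ht : Transcendental L t) (l : L) :
    t + algebraMap L F l ≠ 0 := by
  rw [← sub_neg_eq_add, ← map_neg, sub_ne_zero]
  rintro rfl
  exact ht (isAlgebraic_algebraMap (-l))

theorem eq_zero_of_aeval_add_sum_inv_pow_eq_zero (ht : Transcendental L t) {s : Finset L}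
    {N : ℕ} {q : L[X]} {c : L → Fin N → L}
    (h : aeval t q + ∑ l ∈ s, ∑ j, c l j • (t + algebraMap L F l)⁻¹ ^ (j.1 + 1) = 0) :
    q = 0 ∧ ∀ l ∈ s, ∀ j, c l j = 0 := by
  let : Algebra L[X] F := (aeval t).toAlgebra
  have algebraMap_eq (p : L[X]) : algebraMap L[X] F p = aeval t p := rfl
  have : FaithfulSMul L[X] F :=
    (faithfulSMul_iff_algebraMap_injective _ _).2 (transcendental_iff_injective.1 ht)
  have coprime : Pairwise fun l l' : L => IsCoprime (X + C l) (X + C l') := by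
    simpa only [Function.onFun, map_neg, sub_neg_eq_add] using
      pairwise_coprime_X_sub_C (neg_injective (G := L))
  obtain ⟨hq, hc⟩ := quo_add_sum_rem_mul_pow_inverse_unique (K := F) (s := s)
    (n := fun _ => N) (gi := fun l => (t + algebraMap L F l)⁻¹)
    (r₁ := fun l j => C (c l j)) (q₁ := q) (q₂ := 0) (r₂ := 0)
    (fun l _ => monic_X_add_C l) (coprime.set_pairwise _)
    (fun l _ => by
      simp [algebraMap_eq, add_algebraMap_ne_zero_of_transcendental ht l])
    (fun l _ _ => by simpa using degree_C_lt)
    (fun l _ _ => by simp)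
    (by simpa [algebraMap_eq, Algebra.smul_def] using h)
  exact ⟨hq, fun l hl j => by simpa using congrFun (hc l hl) j⟩

theorem linearIndependent_pow_sumElim_inv_pow (ht : Transcendental L t) :
    LinearIndependent L (Sum.elim (fun n : ℕ => t ^ n)
      fun p : L × ℕ => (t + algebraMap L F p.1)⁻¹ ^ (p.2 + 1)) := by
  classical
  rw [linearIndependent_iff'']
  intro s g hg hsum
  set P := s.toRight.image Prod.fst
  set N := s.toRight.sup Prod.snd + 1
  have toRight_subset : s.toRight ⊆ P ×ˢ Finset.range N := fun p hp => Finset.mem_product.2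
    ⟨Finset.mem_image_of_mem _ hp, Finset.mem_range_succ_iff.2 (Finset.le_sup hp)⟩
  have hfrac : aeval t (∑ n ∈ s.toLeft, C (g (.inl n)) * X ^ n) +
      ∑ l ∈ P, ∑ j : Fin N, g (.inr (l, j)) • (t + algebraMap L F l)⁻¹ ^ (j.1 + 1) = 0 := by
    rw [← hsum]
    conv_rhs => rw [← Finset.toLeft_disjSum_toRight (u := s), Finset.sum_disjSum]
    congr 1
    · simp only [map_sum, map_mul, map_pow, aeval_C, aeval_X, Sum.elim_inl, Algebra.smul_def]
    · rw [Finset.sum_subset toRight_subset, Finset.sum_product]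
      · simp only [Sum.elim_inr, Finset.sum_range]
      · exact fun p _ hp => by rw [hg _ (mt Finset.mem_toRight.2 hp), zero_smul]
  obtain ⟨hpoly, hpole⟩ := eq_zero_of_aeval_add_sum_inv_pow_eq_zero ht hfrac
  rintro (n | ⟨l, j⟩)
  · by_cases h : n ∈ s.toLeft
    · simpa [Finset.mem_toLeft.1 h, coeff_X_pow] using congrArg (coeff · n) hpoly
    · exact hg _ (mt Finset.mem_toLeft.2 h)
  · by_cases h : (l, j) ∈ s.toRight
    · obtain ⟨hl, hj⟩ := Finset.mem_product.1 (toRight_subset h)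
      exact hpole l hl ⟨j, Finset.mem_range.1 hj⟩
    · exact hg _ (mt Finset.mem_toRight.2 h)

theorem linearIndepOn_add_zpow (ht : Transcendental L t) :
    LinearIndepOn L (fun p : ℤ × L => (t + algebraMap L F p.2) ^ p.1)
      {p | 0 ≤ p.1 → p.2 = 0} := by
  let toSum : ℤ × L → ℕ ⊕ L × ℕ
    | (.ofNat n, _) => .inl n
    | (.negSucc n, l) => .inr (l, n)
  have toSum_injOn : Set.InjOn toSum {p | 0 ≤ p.1 → p.2 = 0} := by
    rintro ⟨n | n, l⟩ h ⟨n' | n', l'⟩ h' heq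
    · obtain rfl : l = 0 := h (Int.natCast_nonneg n)
      obtain rfl : l' = 0 := h' (Int.natCast_nonneg n')
      simp_all [toSum]
    all_goals simp_all [toSum]
  have zpow_eq : Set.EqOn (fun p : ℤ × L => (t + algebraMap L F p.2) ^ p.1)
      (Sum.elim (fun n : ℕ => t ^ n)
        (fun p : L × ℕ => (t + algebraMap L F p.1)⁻¹ ^ (p.2 + 1)) ∘ toSum)
      {p | 0 ≤ p.1 → p.2 = 0} := by
    rintro ⟨n | n, l⟩ h
    · obtain rfl : l = 0 := h (Int.natCast_nonneg n)
      simp [toSum]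
    · simp [toSum, zpow_negSucc]
  rw [linearIndepOn_congr zpow_eq]
  exact ((linearIndependent_pow_sumElim_inv_pow ht).linearIndepOn _).comp_of_image toSum_injOn

end Independence

section SeveralVariables

variable (K : Type*) {F V ι : Type*} [Field K] [Field F] [Algebra K F] [AddCommGroup V] [Module K V]
  {n : ℕ}

/-- The partial fraction `∏ k, (y k + w k) ^ ν k` attached to `p = (ν, w)`. The coordinate
`y (Fin.last n)`, the homogenizing one, is not a factor. -/
def partialFraction (y : Fin (n + 1) → F) (p : (Fin n → ℤ) × (Fin n → F)) : F :=
  ∏ k, (y k.castSucc + p.2 k) ^ p.1 k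

/-- The pairs `(ν, w)` for which `partialFraction y (ν, w)` is a basis element: each `w k` is a
linear form in the coordinates after `y k`, trivial where the exponent is nonnegative. This is the
condition `u ∈ U({k | 0 ≤ μ k})` read off on linear forms. -/
def admissibleIndices (y : Fin (n + 1) → V) : Set ((Fin n → ℤ) × (Fin n → V)) :=
  {p | ∀ k, p.2 k ∈ Submodule.span K (y '' Set.Ioi k.castSucc) ∧ (0 ≤ p.1 k → p.2 k = 0)}

/-- The algebra of fractions whose denominators are products of linear forms in `y`. -/
def affineFractions (y : ι → F) : Subalgebra K F :=
  Algebra.adjoin K {z | z ∈ Submodule.span K (Set.range y) ∨ z⁻¹ ∈ Submodule.span K (Set.range y)}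

variable {K}

theorem partialFraction_succ (y : Fin (n + 2) → F) (p : (Fin (n + 1) → ℤ) × (Fin (n + 1) → F)) :
    partialFraction y p = (y 0 + p.2 0) ^ p.1 0 *
      partialFraction (Fin.tail y) (Fin.tail p.1, Fin.tail p.2) :=
  Fin.prod_univ_succ _

theorem mem_admissibleIndices_succ {y : Fin (n + 2) → V}
    {p : (Fin (n + 1) → ℤ) × (Fin (n + 1) → V)} :
    p ∈ admissibleIndices K y ↔
      (p.2 0 ∈ Submodule.span K (Set.range (Fin.tail y)) ∧ (0 ≤ p.1 0 → p.2 0 = 0)) ∧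
        (Fin.tail p.1, Fin.tail p.2) ∈ admissibleIndices K (Fin.tail y) := by
  have image_Ioi_zero : y '' Set.Ioi 0 = Set.range (Fin.tail y) := by
    rw [show Set.Ioi (0 : Fin (n + 2)) = {0}ᶜ from Set.ext fun _ => Fin.pos_iff_ne_zero,
      ← Fin.range_succ, ← Set.range_comp]
    rfl
  have image_Ioi_succ (k : Fin n) :
      y '' Set.Ioi k.succ.castSucc = Fin.tail y '' Set.Ioi k.castSucc := by
    rw [Fin.castSucc_succ, ← Fin.image_succ_Ioi, Set.image_image]; rfl
  simp only [admissibleIndices, Set.mem_ofPred_eq, Fin.forall_fin_succ (n := n), Fin.castSucc_zero,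
    image_Ioi_zero, image_Ioi_succ]
  rfl

theorem inv_mem_affineFractions {y : ι → F} {z : F}
    (hz : z ∈ Submodule.span K (Set.range y)) : z⁻¹ ∈ affineFractions K y :=
  Algebra.subset_adjoin (Or.inr (by rwa [inv_inv]))

theorem span_range_le_affineFractions (y : ι → F) :
    Submodule.span K (Set.range y) ≤ (affineFractions K y).toSubmodule :=
  fun _ hz => Algebra.subset_adjoin (Or.inl hz)

open scoped IntermediateField.algebraAdjoinAdjoin in
theorem transcendental_adjoin_range_tail {x : Fin (n + 1) → F} (hx : AlgebraicIndependent K x) :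
    Transcendental (IntermediateField.adjoin K (Set.range (Fin.tail x))) (x 0) := by
  have h : Transcendental (Algebra.adjoin K (x '' Set.range Fin.succ)) (x 0) :=
    hx.transcendental_adjoin (by simp)
  rw [← Set.range_comp] at h
  exact mt (IsFractionRing.isAlgebraic_iff (Algebra.adjoin K (Set.range (Fin.tail x)))
    (IntermediateField.adjoin K (Set.range (Fin.tail x))) F).2 h

theorem span_range_le_intermediateField {y : ι → F} {L : IntermediateField K F}
    (hL : ∀ i, y i ∈ L) : Submodule.span K (Set.range y) ≤ L.toSubalgebra.toSubmodule :=
  Submodule.span_le.2 (Set.range_subset_iff.2 hL)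

theorem partialFraction_mem_intermediateField {y : Fin (n + 1) → F} {L : IntermediateField K F}
    (hL : ∀ i, y i ∈ L) {p : (Fin n → ℤ) × (Fin n → F)} (hp : p ∈ admissibleIndices K y) :
    partialFraction y p ∈ L :=
  prod_mem fun k _ => zpow_mem (add_mem (hL _) (span_range_le_intermediateField hL
    (Submodule.span_mono (Set.image_subset_range _ _) (hp k).1))) _

theorem linearIndependent_mul_of_intermediateField {κ : Type*} {L : IntermediateField K F}
    {f : ι → F} {g : κ → F} (hfL : ∀ i, f i ∈ L) (hf : LinearIndependent K f)
    (hg : LinearIndependent L g) : LinearIndependent K fun p : ι × κ => f p.1 * g p.2 := by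
  have hf' : LinearIndependent K fun i => (⟨f i, hfL i⟩ : L) := .of_comp L.val.toLinearMap hf
  exact linearIndependent_smul hf' hg

theorem linearIndepOn_partialFraction_succ {y : Fin (n + 2) → F} {L : IntermediateField K F}
    (ht : Transcendental L (y 0)) (hL : ∀ i, Fin.tail y i ∈ L)
    (htail : LinearIndepOn K (partialFraction (Fin.tail y)) (admissibleIndices K (Fin.tail y))) :
    LinearIndepOn K (partialFraction y) (admissibleIndices K y) := by
  let split (p : admissibleIndices K y) :
      admissibleIndices K (Fin.tail y) × {p : ℤ × L | 0 ≤ p.1 → p.2 = 0} :=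
    have hp := mem_admissibleIndices_succ.1 p.2
    (⟨_, hp.2⟩, ⟨(p.1.1 0, ⟨p.1.2 0, span_range_le_intermediateField hL hp.1.1⟩),
      fun h => Subtype.ext (hp.1.2 h)⟩)
  have split_injective : Function.Injective split := by
    rintro ⟨⟨ν, w⟩, hp⟩ ⟨⟨ν', w'⟩, hp'⟩ h
    simp only [split, Prod.mk.injEq, Subtype.mk.injEq] at h
    obtain ⟨⟨hν, hw⟩, hν0, hw0⟩ := h
    rw [Subtype.mk.injEq, Prod.mk.injEq, ← Fin.cons_self_tail ν, ← Fin.cons_self_tail ν',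
      ← Fin.cons_self_tail w, ← Fin.cons_self_tail w', hν, hw, hν0, hw0]
    exact ⟨rfl, rfl⟩
  have hmul := linearIndependent_mul_of_intermediateField
    (fun p => partialFraction_mem_intermediateField hL p.2) htail (linearIndepOn_add_zpow ht)
  have factor : (fun p : admissibleIndices K y => partialFraction y p) =
      (fun p => partialFraction (Fin.tail y) p.1 *
        (y 0 + algebraMap L F p.2.1.2) ^ p.2.1.1) ∘ split :=
    funext fun p => (partialFraction_succ y p).trans (mul_comm _ _)
  rw [LinearIndepOn, factor]
  exact hmul.comp split split_injective

theorem linearIndepOn_partialFraction {y : Fin (n + 1) → F}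
    (hy : AlgebraicIndependent K (Fin.init y)) (hlast : y (Fin.last n) = 1) :
    LinearIndepOn K (partialFraction y) (admissibleIndices K y) := by
  induction n with
  | zero =>
    have h : LinearIndepOn K (partialFraction y) {0} := .singleton (by simp [partialFraction])
    exact h.mono fun p _ => Subsingleton.elim p 0
  | succ n ih =>
    have tail_indep : AlgebraicIndependent K (Fin.init (Fin.tail y)) := by
      rw [← Fin.tail_init_eq_init_tail]
      exact hy.comp _ (Fin.succ_injective n)
    have head_transcendental :
        Transcendental (IntermediateField.adjoin K (Set.range (Fin.tail (Fin.init y)))) (y 0) :=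
      transcendental_adjoin_range_tail hy
    refine linearIndepOn_partialFraction_succ head_transcendental
      (Fin.lastCases ?_ fun i => ?_) (ih tail_indep hlast)
    · rw [Fin.tail, Fin.succ_last, hlast]
      exact one_mem _
    · exact IntermediateField.subset_adjoin K _ ⟨i, rfl⟩

theorem restrictScalars_span_le_mul_span (A : Subalgebra K F) (s : Set F) :
    (Submodule.span A s).restrictScalars K ≤ A.toSubmodule * Submodule.span K s := by
  intro z hz
  rw [Submodule.restrictScalars_mem] at hz
  induction hz using Submodule.span_induction with
  | mem x hx => exact one_mul x ▸ Submodule.mul_mem_mul A.one_mem (Submodule.subset_span hx)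
  | zero => exact zero_mem _
  | add x y _ _ hx hy => exact add_mem hx hy
  | smul a x _ hx =>
    rw [← A.isIdempotentElem_toSubmodule.eq, mul_assoc]
    exact Submodule.mul_mem_mul a.2 hx

theorem add_ne_zero_of_mem_span_range_tail {y : Fin (n + 1) → V} (hy : LinearIndependent K y)
    {l : V} (hl : l ∈ Submodule.span K (Set.range (Fin.tail y))) : y 0 + l ≠ 0 := fun h =>
  (linearIndependent_finSucc.1 hy).2 (eq_neg_of_add_eq_zero_left h ▸ neg_mem hl)

theorem affineFractions_succ_le (y : Fin (n + 2) → F) :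
    affineFractions K y ≤ (Algebra.adjoin (affineFractions K (Fin.tail y))
      (insert (y 0) ((fun l : affineFractions K (Fin.tail y) => (y 0 + l : F)⁻¹) ''
        {l | (l : F) ∈ Submodule.span K (Set.range (Fin.tail y))}))).restrictScalars K := by
  set A := affineFractions K (Fin.tail y)
  set B := Algebra.adjoin A
      (insert (y 0) ((fun l : affineFractions K (Fin.tail y) => (y 0 + l : F)⁻¹) ''
        {l | (l : F) ∈ Submodule.span K (Set.range (Fin.tail y))}))
  have mem_of_mem_tail {a : F} (ha : a ∈ A) : a ∈ B := B.algebraMap_mem (⟨a, ha⟩ : A)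
  have head_mem : y 0 ∈ B := Algebra.subset_adjoin (Set.mem_insert _ _)
  have inv_mem {l : F} (hl : l ∈ Submodule.span K (Set.range (Fin.tail y))) :
      (y 0 + l)⁻¹ ∈ B :=
    Algebra.subset_adjoin
      (Or.inr ⟨⟨l, span_range_le_affineFractions _ hl⟩, hl, rfl⟩)
  have span_le : Submodule.span K (Set.range y) ≤ (B.restrictScalars K).toSubmodule := by
    rw [Submodule.span_le, Fin.range_fin_succ, Set.insert_subset_iff]
    exact ⟨head_mem, fun z hz =>
      mem_of_mem_tail (span_range_le_affineFractions _ (Submodule.subset_span hz))⟩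
  refine Algebra.adjoin_le ?_
  rintro z (hz | hz)
  · exact span_le hz
  · rw [Fin.range_fin_succ, Submodule.mem_span_insert] at hz
    obtain ⟨c, l, hl, hz⟩ := hz
    rw [← inv_inv z, hz]
    obtain rfl | hc := eq_or_ne c 0
    · rw [zero_smul, zero_add]
      exact mem_of_mem_tail (inv_mem_affineFractions hl)
    · have inv_eq : (c • y 0 + l)⁻¹ = c⁻¹ • (y 0 + c⁻¹ • l)⁻¹ := by
        rw [← smul_inv_smul₀ hc l, ← smul_add, smul_inv₀, smul_inv_smul₀ hc]
      rw [inv_eq]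
      exact (B.restrictScalars K).smul_mem (inv_mem (Submodule.smul_mem _ _ hl)) _

theorem affineFractions_succ_le_mul_span {y : Fin (n + 2) → F} (hy : LinearIndependent K y) :
    (affineFractions K y).toSubmodule ≤ (affineFractions K (Fin.tail y)).toSubmodule *
      Submodule.span K ((fun p : ℤ × F => (y 0 + p.2) ^ p.1) ''
        {p | p.2 ∈ Submodule.span K (Set.range (Fin.tail y)) ∧ (0 ≤ p.1 → p.2 = 0)}) := by
  set A := affineFractions K (Fin.tail y)
  let S : Set A := {l | (l : F) ∈ Submodule.span K (Set.range (Fin.tail y))}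
  have isUnit_sub : S.Pairwise fun a b => IsUnit (a - b) := fun a ha b hb hab =>
    IsUnit.of_mul_eq_one ⟨_, inv_mem_affineFractions (sub_mem ha hb)⟩
      (Subtype.ext (mul_inv_cancel₀ (sub_ne_zero.2 (Subtype.coe_injective.ne hab))))
  have hadjoin := adjoin_inv_add_eq_span_zpow (S := S) (zero_mem (Submodule.span K _))
    (fun l hl => add_ne_zero_of_mem_span_range_tail hy hl) isUnit_sub
  intro z hz
  have hz' := hadjoin.le (affineFractions_succ_le y hz)
  refine mul_le_mul_right (Submodule.span_mono ?_) _ (restrictScalars_span_le_mul_span _ _ hz')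
  rintro _ ⟨⟨m, l⟩, ⟨hl, hm⟩, rfl⟩
  exact ⟨(m, l), ⟨hl, fun h => congrArg Subtype.val (hm h)⟩, rfl⟩

theorem affineFractions_zero {y : Fin 1 → F} (hlast : y (Fin.last 0) = 1) :
    affineFractions K y = ⊥ := by
  have hspan : Submodule.span K (Set.range y) = (⊥ : Subalgebra K F).toSubmodule := by
    rw [Set.range_unique, Algebra.toSubmodule_bot, Submodule.one_eq_span]
    exact congrArg (fun z => Submodule.span K {z}) hlast
  refine eq_bot_iff.2 (Algebra.adjoin_le ?_)
  simp only [hspan, Subalgebra.mem_toSubmodule, Algebra.mem_bot]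
  rintro z (hz | ⟨c, hc⟩)
  · exact hz
  · exact ⟨c⁻¹, (map_inv₀ _ c).trans (inv_eq_iff_eq_inv.2 hc)⟩

theorem affineFractions_le_span_partialFraction {y : Fin (n + 1) → F}
    (hy : LinearIndependent K y) (hlast : y (Fin.last n) = 1) :
    (affineFractions K y).toSubmodule ≤
      Submodule.span K (partialFraction y '' admissibleIndices K y) := by
  induction n with
  | zero =>
    rw [affineFractions_zero hlast, Algebra.toSubmodule_bot, Submodule.one_eq_span]
    refine Submodule.span_mono (Set.singleton_subset_iff.2 ⟨0, fun k => k.elim0, ?_⟩)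
    exact Finset.prod_of_isEmpty _
  | succ n ih =>
    refine (affineFractions_succ_le_mul_span hy).trans
      ((mul_le_mul_left (ih (linearIndependent_finSucc.1 hy).1 hlast) _).trans ?_)
    rw [Submodule.span_mul_span, Submodule.span_le]
    rintro _ ⟨_, ⟨⟨ν, w⟩, hp, rfl⟩, _, ⟨⟨m, l⟩, hl, rfl⟩, rfl⟩
    refine Submodule.subset_span ⟨(Fin.cons m ν, Fin.cons l w), ?_, ?_⟩
    · exact mem_admissibleIndices_succ.2 ⟨hl, hp⟩
    · exact (partialFraction_succ _ _).trans (mul_comm _ _)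

end SeveralVariables

section IndexBijection

variable {K : Type} {V : Type*} [Field K] [AddCommGroup V] [Module K V] {n : ℕ}

/-- The part `∑_{i > k} u i k • y i` of the form `u_* y k` lying strictly below the diagonal. -/
def subdiagonalForm (y : Fin (n + 1) → V) (u : Matrix (Fin (n + 1)) (Fin (n + 1)) K)
    (k : Fin n) : V :=
  ∑ i ∈ Finset.Ioi k.castSucc, u i k.castSucc • y i

/-- Passage from the indices `(μ, u)` of the `Φ(μ, u)` to the indices of `partialFraction y`: the
last exponent is dropped, and of `u` only the subdiagonal parts of the forms are kept. -/
def formIndex (y : Fin (n + 1) → V)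
    (p : (Fin (n + 1) → ℤ) × Matrix (Fin (n + 1)) (Fin (n + 1)) K) :
    (Fin n → ℤ) × (Fin n → V) :=
  (Fin.init p.1, subdiagonalForm y p.2)

theorem mapsTo_formIndex (y : Fin (n + 1) → V) :
    Set.MapsTo (formIndex y) {p | PFDvalid K n p} (admissibleIndices K y) := by
  rintro ⟨μ, u⟩ ⟨-, -, -, hu⟩ k
  have form_eq : (formIndex y (μ, u)).2 k = ∑ i ∈ Finset.Ioi k.castSucc, u i k.castSucc • y i :=
    rfl
  rw [form_eq]
  constructor
  · exact sum_mem fun i hi =>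
      Submodule.smul_mem _ _ (Submodule.subset_span ⟨i, Finset.mem_Ioi.1 hi, rfl⟩)
  · intro hk
    refine Finset.sum_eq_zero fun i hi => ?_
    have entry_eq_zero : u i k.castSucc = 0 := hu i _ (Finset.mem_Ioi.1 hi) hk
    rw [entry_eq_zero, zero_smul]

theorem eq_of_subdiagonalForm_eq {y : Fin (n + 1) → V} (hy : LinearIndependent K y)
    {u u' : Matrix (Fin (n + 1)) (Fin (n + 1)) K}
    (h : subdiagonalForm y u = subdiagonalForm y u') {i j : Fin (n + 1)} (hij : j < i) :
    u i j = u' i j := by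
  obtain ⟨k, rfl⟩ := Fin.exists_castSucc_eq.2 (hij.trans_le (Fin.le_last i)).ne
  have hsum : ∑ i ∈ Finset.Ioi k.castSucc, (u i k.castSucc - u' i k.castSucc) • y i = 0 := by
    simp only [sub_smul, Finset.sum_sub_distrib]
    exact sub_eq_zero.2 (congrFun h k)
  exact sub_eq_zero.1 (linearIndependent_iff'.1 hy _ _ hsum i (Finset.mem_Ioi.2 hij))

theorem injOn_formIndex {y : Fin (n + 1) → V} (hy : LinearIndependent K y) :
    Set.InjOn (formIndex y) {p | PFDvalid K n p} := by
  rintro ⟨μ, u⟩ ⟨hsum, hdiag, hupper, -⟩ ⟨μ', u'⟩ ⟨hsum', hdiag', hupper', -⟩ h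
  obtain ⟨hμ, hu⟩ := Prod.mk.injEq _ _ _ _ ▸ h
  have hμ' (k : Fin n) : μ k.castSucc = μ' k.castSucc := congrFun hμ k
  have hμ_last : μ (Fin.last n) = μ' (Fin.last n) := by
    rw [Fin.sum_univ_castSucc] at hsum hsum'
    simp only [hμ'] at hsum
    exact add_left_cancel (hsum.trans hsum'.symm)
  refine Prod.ext (funext (Fin.lastCases hμ_last hμ')) (Matrix.ext fun i j => ?_)
  obtain hij | rfl | hij := lt_trichotomy i j
  · exact (hupper i j hij).trans (hupper' i j hij).symm
  · exact (hdiag i).trans (hdiag' i).symm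
  · exact eq_of_subdiagonalForm_eq hy hu hij

theorem exists_sum_smul_eq_of_mem_admissibleIndices {y : Fin (n + 1) → V}
    {p : (Fin n → ℤ) × (Fin n → V)} (hp : p ∈ admissibleIndices K y) (k : Fin n) :
    ∃ c : Fin (n + 1) → K,
      ∑ i ∈ Finset.Ioi k.castSucc, c i • y i = p.2 k ∧ (0 ≤ p.1 k → c = 0) := by
  obtain ⟨hmem, hzero⟩ := hp k
  by_cases hk : 0 ≤ p.1 k
  · exact ⟨0, by simp [hzero hk], fun _ => rfl⟩
  · rw [← Finset.coe_Ioi, Submodule.mem_span_image_finset_iff_exists_fun'] at hmem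
    exact hmem.imp fun c hc => ⟨hc, fun h => absurd h hk⟩

theorem surjOn_formIndex (y : Fin (n + 1) → V) :
    Set.SurjOn (formIndex y) {p | PFDvalid K n p} (admissibleIndices K y) := by
  rintro ⟨ν, w⟩ hp
  choose c hc hc0 using exists_sum_smul_eq_of_mem_admissibleIndices hp
  let μ : Fin (n + 1) → ℤ := Fin.snoc ν (-∑ k, ν k)
  let u : Matrix (Fin (n + 1)) (Fin (n + 1)) K := fun i j =>
    if j < i then Fin.snoc (α := fun _ => K) (fun k => c k i) 0 j else if j = i then 1 else 0
  have μ_castSucc (k : Fin n) : μ k.castSucc = ν k := Fin.snoc_castSucc (α := fun _ => ℤ) _ _ k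
  have u_castSucc {i : Fin (n + 1)} {k : Fin n} (hi : k.castSucc < i) :
      u i k.castSucc = c k i := by
    simp only [u, if_pos hi, Fin.snoc_castSucc]
  have u_of_le {i j : Fin (n + 1)} (hij : i ≤ j) : u i j = if j = i then 1 else 0 :=
    if_neg hij.not_gt
  have lower (i j : Fin (n + 1)) (hij : j < i) (hj : 0 ≤ μ j) : u i j = 0 := by
    obtain ⟨k, rfl⟩ := Fin.exists_castSucc_eq.2 (hij.trans_le (Fin.le_last i)).ne
    rw [u_castSucc hij, hc0 k (hj.trans_eq (μ_castSucc k)), Pi.zero_apply]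
  have valid : PFDvalid K n (μ, u) := by
    refine ⟨?_, fun i => ?_, fun i j hij => ?_, lower⟩
    · simp [μ, Fin.sum_univ_castSucc]
    · exact (u_of_le le_rfl).trans (if_pos rfl)
    · exact (u_of_le hij.le).trans (if_neg hij.ne')
  refine ⟨(μ, u), valid, Prod.ext (funext μ_castSucc) (funext fun k => ?_)⟩
  calc subdiagonalForm y u k = ∑ i ∈ Finset.Ioi k.castSucc, c k i • y i :=
        Finset.sum_congr rfl fun i hi => by rw [u_castSucc (Finset.mem_Ioi.1 hi)]
    _ = w k := hc k

theorem bijOn_formIndex {y : Fin (n + 1) → V} (hy : LinearIndependent K y) :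
    Set.BijOn (formIndex y) {p | PFDvalid K n p} (admissibleIndices K y) :=
  ⟨mapsTo_formIndex y, injOn_formIndex hy, surjOn_formIndex y⟩

end IndexBijection

section AffineChart

open MvPolynomial

variable (K : Type*) [Field K] (d : ℕ)

/-- The homogeneous coordinates `x_0, …, x_{d-1}, 1` on the chart `Ξ_d ≠ 0`. They turn polynomials
of degree at most one into linear forms. -/
noncomputable def homogeneousCoord : Fin (d + 1) → FractionRing (MvPolynomial (Fin d) K) :=
  Fin.snoc (fun k => algebraMap (MvPolynomial (Fin d) K) _ (X k)) 1

variable {K d}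

theorem homogeneousCoord_castSucc (k : Fin d) :
    homogeneousCoord K d k.castSucc = algebraMap (MvPolynomial (Fin d) K) _ (X k) :=
  Fin.snoc_castSucc (α := fun _ => FractionRing (MvPolynomial (Fin d) K)) _ _ k

theorem homogeneousCoord_last : homogeneousCoord K d (Fin.last d) = 1 :=
  Fin.snoc_last (α := fun _ => FractionRing (MvPolynomial (Fin d) K)) _ _

theorem algebraMap_fractionRing_C {σ : Type*} (c : K) :
    algebraMap (MvPolynomial σ K) (FractionRing (MvPolynomial σ K)) (C c) =
      algebraMap K _ c := by
  rw [← MvPolynomial.algebraMap_eq, ← IsScalarTower.algebraMap_apply]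

theorem algebraicIndependent_init_homogeneousCoord :
    AlgebraicIndependent K (Fin.init (homogeneousCoord K d)) := by
  rw [homogeneousCoord, Fin.init_snoc]
  exact (algebraicIndependent_X (Fin d) K).map' (f := IsScalarTower.toAlgHom K
    (MvPolynomial (Fin d) K) (FractionRing (MvPolynomial (Fin d) K))) (IsFractionRing.injective _ _)

theorem linearIndependent_homogeneousCoord : LinearIndependent K (homogeneousCoord K d) := by
  have exponent_injective : Function.Injective
      (Fin.snoc (fun k => Finsupp.single k 1) 0 : Fin (d + 1) → Fin d →₀ ℕ) :=
    Fin.snoc_injective_iff.2 ⟨Finsupp.single_left_injective one_ne_zero, by simp⟩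
  let toFractions : MvPolynomial (Fin d) K →ₗ[K] FractionRing (MvPolynomial (Fin d) K) :=
    (IsScalarTower.toAlgHom K _ _).toLinearMap
  have h := ((basisMonomials (Fin d) K).linearIndependent.comp _ exponent_injective).map'
    toFractions (LinearMap.ker_eq_bot.2 (IsFractionRing.injective _ _))
  have coord_eq : homogeneousCoord K d =
      toFractions ∘ basisMonomials (Fin d) K ∘ Fin.snoc (fun k => Finsupp.single k 1) 0 := by
    funext k
    induction k using Fin.lastCases with
    | last => simp [homogeneousCoord_last, toFractions]
    | cast k => simp [homogeneousCoord_castSucc, X, toFractions]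
  exact coord_eq ▸ h

theorem algebraMap_monomial_mem_span_homogeneousCoord {m : Fin d →₀ ℕ} (hm : m.degree ≤ 1) :
    algebraMap (MvPolynomial (Fin d) K) (FractionRing (MvPolynomial (Fin d) K)) (monomial m 1) ∈
      Submodule.span K (Set.range (homogeneousCoord K d)) := by
  apply Submodule.subset_span
  obtain h | h := Nat.le_one_iff_eq_zero_or_eq_one.1 hm
  · obtain rfl := (Finsupp.degree_eq_zero_iff m).1 h
    exact ⟨Fin.last d, homogeneousCoord_last.trans (map_one _).symm⟩
  · obtain ⟨k, rfl⟩ := (Finsupp.sum_eq_one_iff m).1 h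
    exact ⟨k.castSucc, homogeneousCoord_castSucc k⟩

theorem algebraMap_mem_span_homogeneousCoord {q : MvPolynomial (Fin d) K}
    (hq : q.totalDegree ≤ 1) :
    algebraMap (MvPolynomial (Fin d) K) (FractionRing (MvPolynomial (Fin d) K)) q ∈
      Submodule.span K (Set.range (homogeneousCoord K d)) := by
  rw [q.as_sum, map_sum]
  refine sum_mem fun m hm => ?_
  rw [← mul_one (coeff m q), ← C_mul_monomial, map_mul, algebraMap_fractionRing_C,
    ← Algebra.smul_def]
  exact Submodule.smul_mem _ _
    (algebraMap_monomial_mem_span_homogeneousCoord ((le_totalDegree hm).trans hq))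

theorem div_mem_affineFractions (P : MvPolynomial (Fin d) K)
    {l : List (MvPolynomial (Fin d) K)} (hl : ∀ q ∈ l, q.totalDegree ≤ 1) :
    algebraMap (MvPolynomial (Fin d) K) (FractionRing (MvPolynomial (Fin d) K)) P /
      algebraMap (MvPolynomial (Fin d) K) (FractionRing (MvPolynomial (Fin d) K)) l.prod ∈
        affineFractions K (homogeneousCoord K d) := by
  rw [div_eq_mul_inv, map_list_prod, List.prod_inv, List.map_map]
  refine mul_mem ?_ (list_prod_mem (List.forall_mem_map.2 fun q hq =>
    inv_mem_affineFractions (algebraMap_mem_span_homogeneousCoord (hl q hq))))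
  induction P using MvPolynomial.induction_on with
  | C a => exact algebraMap_fractionRing_C a ▸ Subalgebra.algebraMap_mem _ _
  | add p q hp hq => rw [map_add]; exact add_mem hp hq
  | mul_X p k hp =>
    rw [map_mul, ← homogeneousCoord_castSucc]
    exact mul_mem hp (span_range_le_affineFractions _ (Submodule.subset_span ⟨_, rfl⟩))

end AffineChart

section Decomposition

variable {K : Type} [Field K] {d : ℕ}

theorem algebraMap_PFDell (u : Matrix (Fin (d + 1)) (Fin (d + 1)) K) (k : Fin d) :
    algebraMap _ _ (PFDell K d u k) =
      homogeneousCoord K d k.castSucc + subdiagonalForm (homogeneousCoord K d) u k := by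
  rw [subdiagonalForm, ← Finset.filter_lt_eq_Ioi, Finset.sum_filter, Fin.sum_univ_castSucc,
    if_pos (Fin.castSucc_lt_last k)]
  simp only [Fin.castSucc_lt_castSucc_iff, ← Finset.sum_filter, homogeneousCoord_castSucc,
    homogeneousCoord_last, PFDell, Algebra.smul_def, map_add, map_sum, map_mul,
    algebraMap_fractionRing_C, mul_one, add_assoc]

theorem PFDPhi_eq_partialFraction
    (p : (Fin (d + 1) → ℤ) × Matrix (Fin (d + 1)) (Fin (d + 1)) K) :
    PFDPhi K d p.1 p.2 =
      partialFraction (homogeneousCoord K d) (formIndex (homogeneousCoord K d) p) :=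
  Finset.prod_congr rfl fun k _ => congrArg (· ^ p.1 k.castSucc) (algebraMap_PFDell p.2 k)

theorem linearIndepOn_PFDPhi :
    LinearIndepOn K (fun p => PFDPhi K d p.1 p.2) {p | PFDvalid K d p} := by
  have hbij := bijOn_formIndex (linearIndependent_homogeneousCoord (K := K) (d := d))
  simp only [PFDPhi_eq_partialFraction]
  refine LinearIndepOn.comp_of_image (v := partialFraction (homogeneousCoord K d)) ?_ hbij.injOn
  rw [hbij.image_eq]
  exact linearIndepOn_partialFraction algebraicIndependent_init_homogeneousCoord
    homogeneousCoord_last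

theorem affineFractions_le_span_PFDPhi :
    (affineFractions K (homogeneousCoord K d)).toSubmodule ≤
      Submodule.span K ((fun p => PFDPhi K d p.1 p.2) '' {p | PFDvalid K d p}) := by
  have hbij := bijOn_formIndex (linearIndependent_homogeneousCoord (K := K) (d := d))
  simp only [PFDPhi_eq_partialFraction]
  rw [← Set.image_image, hbij.image_eq]
  exact affineFractions_le_span_partialFraction linearIndependent_homogeneousCoord
    homogeneousCoord_last

end Decomposition

theorem stmt_19_general (K : Type) [Field K] (d : ℕ) :
    (∀ (P : MvPolynomial (Fin d) K) (l : List (MvPolynomial (Fin d) K)),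
      (∀ q ∈ l, q.totalDegree ≤ 1) → l.prod ≠ 0 →
      ∃ A : ((Fin (d + 1) → ℤ) × Matrix (Fin (d + 1)) (Fin (d + 1)) K) →₀ K,
        (∀ p ∈ A.support, PFDvalid K d p) ∧
        algebraMap (MvPolynomial (Fin d) K) (FractionRing (MvPolynomial (Fin d) K)) P /
          algebraMap (MvPolynomial (Fin d) K) (FractionRing (MvPolynomial (Fin d) K)) l.prod
          = A.sum (fun p a => a • PFDPhi K d p.1 p.2)) ∧
    LinearIndependent K
      (fun p : {p : (Fin (d + 1) → ℤ) × Matrix (Fin (d + 1)) (Fin (d + 1)) K //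
          PFDvalid K d p} => PFDPhi K d p.1.1 p.1.2) := by
  refine ⟨fun P l hl _ => ?_, linearIndepOn_PFDPhi⟩
  obtain ⟨A, hA, hsum⟩ := (Finsupp.mem_span_image_iff_linearCombination K).1
    (affineFractions_le_span_PFDPhi (div_mem_affineFractions P hl))
  exact ⟨A, (Finsupp.mem_supported K A).1 hA, hsum.symm⟩

/-- Every P/Q in F, with Q a nonzero finite product of polynomials of
total degree at most one, is a finite K-linear combination of the functions Φ(μ,u)
with Σ_k μ(k) = 0 and u ∈ U({k : μ(k) ≥ 0}); moreover this family (Φ(μ,u)) is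
K-linearly independent, so the coefficients are unique. -/
theorem stmt_19 (K : Type) [Field K] [CharZero K] (d : ℕ) (hd : 1 ≤ d) :
    (∀ (P : MvPolynomial (Fin d) K) (l : List (MvPolynomial (Fin d) K)),
      (∀ q ∈ l, q.totalDegree ≤ 1) → l.prod ≠ 0 →
      ∃ A : ((Fin (d+1) → ℤ) × Matrix (Fin (d+1)) (Fin (d+1)) K) →₀ K,
        (∀ p ∈ A.support, PFDvalid K d p) ∧
        algebraMap (MvPolynomial (Fin d) K) (FractionRing (MvPolynomial (Fin d) K)) P /
          algebraMap (MvPolynomial (Fin d) K) (FractionRing (MvPolynomial (Fin d) K)) l.prod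
          = A.sum (fun p a => a • PFDPhi K d p.1 p.2)) ∧
    LinearIndependent K
      (fun p : {p : (Fin (d+1) → ℤ) × Matrix (Fin (d+1)) (Fin (d+1)) K // PFDvalid K d p} =>
        PFDPhi K d p.1.1 p.1.2) :=
  stmt_19_general K d
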